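/- arXiv:1710.07132 — 8 statements merged into one kernel-verified Lean document; each statement's English description precedes it below -/
import Mathlib

section
/- For every integer k ≥ 1 there exists a finite simple graph G with χ₃(G) = 1 and χ(G) = k; equivalently, there exists a triangle-free finite simple graph whose chromatic number equals k. -/
/-- A triangle-free coloring of `G` with `k` colors: no three mutually adjacent
vertices receive the same color. -/
def IsTriangleFreeColoring {V : Type*} (G : SimpleGraph V) {k : ℕ} (c : V → Fin k) : Prop :=
  ∀ u v w : V, G.Adj u v → G.Adj v w → G.Adj u w → ¬(c u = c v ∧ c v = c w)

/-- The triangle-free chromatic number: the least `k` admitting a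
triangle-free `k`-coloring. -/
noncomputable def triChromNum {V : Type*} (G : SimpleGraph V) : ℕ :=
  sInf {k : ℕ | ∃ c : V → Fin k, IsTriangleFreeColoring G c}

/-- The chromatic number: the least number of colors in a proper coloring. -/
noncomputable def chromNum {V : Type*} (G : SimpleGraph V) : ℕ :=
  sInf {n : ℕ | G.Colorable n}

/-- Mycielski construction. -/
def mycAdj {V : Type} (G : SimpleGraph V) : Option (V ⊕ V) → Option (V ⊕ V) → Prop
  | some (.inl u), some (.inl v) => G.Adj u v
  | some (.inl u), some (.inr v) => G.Adj u v
  | some (.inr u), some (.inl v) => G.Adj u v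
  | some (.inr _), some (.inr _) => False
  | none, some (.inr _) => True
  | some (.inr _), none => True
  | none, some (.inl _) => False
  | some (.inl _), none => False
  | none, none => False

/-- Mycielski graph. -/
def myc {V : Type} (G : SimpleGraph V) : SimpleGraph (Option (V ⊕ V)) where
  Adj := mycAdj G
  symm := ⟨by
    rintro (_ | u | u) (_ | v | v) h <;> simp_all [mycAdj, G.adj_comm]⟩
  loopless := ⟨by
    rintro (_ | u | u) h <;> simp_all [mycAdj]⟩

/-- No triangles. -/
def TriFree {V : Type} (G : SimpleGraph V) : Prop :=
  ∀ u v w : V, G.Adj u v → G.Adj v w → G.Adj u w → False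

theorem myc_triFree {V : Type} (G : SimpleGraph V) (h : TriFree G) : TriFree (myc G) := by
  rintro (_ | u | u) (_ | v | v) (_ | w | w) h1 h2 h3 <;>
    simp only [myc, mycAdj] at h1 h2 h3 <;> exact h u v w h1 h2 h3

theorem myc_colorable {V : Type} (G : SimpleGraph V) (k : ℕ) (h : G.Colorable k) :
    (myc G).Colorable (k + 1) := by
  obtain ⟨c⟩ := h
  let C : (myc G).Coloring (Option (Fin k)) := SimpleGraph.Coloring.mk
    (fun x => match x with
      | none => none
      | some (.inl u) => some (c u)
      | some (.inr u) => some (c u)) (by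
    rintro (_ | u | u) (_ | v | v) h <;> simp only [myc, mycAdj] at h <;>
      first
      | simp; done
      | (have := c.valid h; simpa using this))
  simpa using C.colorable

theorem colorable_of_myc {V : Type} (G : SimpleGraph V) (n : ℕ)
    (h : (myc G).Colorable (n + 1)) : G.Colorable n := by
  obtain ⟨c⟩ := h
  have hr : ∀ v, c (some (.inr v)) ≠ c none := fun v =>
    c.valid (show mycAdj G (some (.inr v)) none from trivial)
  have hll : ∀ u v, G.Adj u v → c (some (.inl u)) ≠ c (some (.inl v)) := fun u v e =>
    c.valid (show mycAdj G (some (.inl u)) (some (.inl v)) from e)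
  have hlr : ∀ u v, G.Adj u v → c (some (.inl u)) ≠ c (some (.inr v)) := fun u v e =>
    c.valid (show mycAdj G (some (.inl u)) (some (.inr v)) from e)
  let C : G.Coloring {x : Fin (n + 1) // x ≠ c none} := SimpleGraph.Coloring.mk
    (fun v => if hv : c (some (.inl v)) = c none then ⟨c (some (.inr v)), hr v⟩
      else ⟨c (some (.inl v)), hv⟩) (by
    intro u v e
    have h1 := hll u v e
    have h2 := hlr u v e
    have h3 := hlr v u e.symm
    by_cases hu : c (some (.inl u)) = c none <;> by_cases hv : c (some (.inl v)) = c none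
    · exact absurd (hu.trans hv.symm) h1
    · simpa [hu, hv] using h3.symm
    · simpa [hu, hv] using h2
    · simpa [hu, hv] using h1)
  simpa using C.colorable

theorem exists_myc (k : ℕ) : ∃ (V : Type) (_ : Fintype V) (_ : Nonempty V) (G : SimpleGraph V),
    TriFree G ∧ G.Colorable (k + 1) ∧ ∀ m, G.Colorable m → k + 1 ≤ m := by
  induction k with
  | zero =>
    refine ⟨Unit, inferInstance, inferInstance, ⊥, ?_, ?_, ?_⟩
    · intro u v w h; simp at h
    · exact ⟨SimpleGraph.Coloring.mk (fun _ => 0) (by intro u v h; simp at h)⟩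
    · rintro m ⟨c⟩
      have := (c ()).pos
      omega
  | succ k ih =>
    obtain ⟨V, _, _, G, h1, h2, h3⟩ := ih
    refine ⟨Option (V ⊕ V), inferInstance, inferInstance, myc G, myc_triFree G h1,
      myc_colorable G _ h2, ?_⟩
    rintro (_ | m) hm
    · obtain ⟨c⟩ := hm
      exact (c none).elim0
    · have := h3 m (colorable_of_myc G m hm)
      omega

/-- For every `k ≥ 1` there is a finite simple graph with `χ₃(G) = 1` and `χ(G) = k`. -/
theorem exists_triangleFree_graph_with_chromNum (k : ℕ) (hk : 1 ≤ k) :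
    ∃ (n : ℕ) (G : SimpleGraph (Fin n)), triChromNum G = 1 ∧ chromNum G = k := by
  obtain ⟨j, rfl⟩ : ∃ j, k = j + 1 := ⟨k - 1, by omega⟩
  obtain ⟨V, _, ⟨v0⟩, G, h1, h2, h3⟩ := exists_myc j
  let e := Fintype.equivFin V
  let f : G ≃g G.map e.toEmbedding := SimpleGraph.Iso.map e G
  refine ⟨Fintype.card V, G.map e.toEmbedding, ?_, ?_⟩
  · apply le_antisymm
    · apply Nat.sInf_le
      refine ⟨fun _ => 0, ?_⟩
      intro u v w a b c _
      exact h1 _ _ _ (f.symm.map_adj_iff.2 a) (f.symm.map_adj_iff.2 b) (f.symm.map_adj_iff.2 c)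
    · apply le_csInf
      · exact ⟨1, fun _ => 0, fun u v w a b c _ =>
          h1 _ _ _ (f.symm.map_adj_iff.2 a) (f.symm.map_adj_iff.2 b) (f.symm.map_adj_iff.2 c)⟩
      · rintro m ⟨c, _⟩
        exact (c (e v0)).pos
  · have h2' : (G.map e.toEmbedding).Colorable (j + 1) := h2.of_hom f.symm.toHom
    apply le_antisymm
    · exact Nat.sInf_le h2'
    · apply le_csInf
      · exact ⟨_, h2'⟩
      · intro m hm
        exact h3 m (SimpleGraph.Colorable.of_hom f.toHom hm)
end

section
/- Let k ≥ 1. In every triangle-free k-coloring of the k-cycle-clique, for every i ∈ {0,…,4} the k vertices of the joint J_i receive pairwise distinct colors. -/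
/-- The `k`-cycle-clique with `r` joints: vertices `v_{i,j}` for `i < r`, `j < k`;
two distinct vertices are adjacent iff their first coordinates are at cyclic
distance at most 1 modulo `r`. -/
def cycleClique (r k : ℕ) : SimpleGraph (Fin r × Fin k) :=
  SimpleGraph.fromRel (fun p q => (p.1.val + 1) % r = q.1.val ∨ p.1 = q.1)

theorem cc_adj {k : ℕ} (i : Fin 5) (p q : Fin 5 × Fin k) (hp : p.1 = i ∨ p.1 = i + 1)
    (hq : q.1 = i ∨ q.1 = i + 1) (h : p ≠ q) : (cycleClique 5 k).Adj p q := by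
  obtain ⟨p1, p2⟩ := p
  obtain ⟨q1, q2⟩ := q
  simp only [cycleClique, SimpleGraph.fromRel_adj]
  refine ⟨h, ?_⟩
  clear h
  simp only at hp hq
  revert i p1 q1
  decide

/-- Number of vertices of color `a` in joint `i`. -/
def ccCount {k : ℕ} (c : Fin 5 × Fin k → Fin k) (i : Fin 5) (a : Fin k) : ℕ :=
  (Finset.univ.filter (fun j => c (i, j) = a)).card

theorem ccCount_le {k : ℕ} (c : Fin 5 × Fin k → Fin k)
    (hc : IsTriangleFreeColoring (cycleClique 5 k) c) (i : Fin 5) (a : Fin k) :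
    ccCount c i a + ccCount c (i + 1) a ≤ 2 := by
  have hinj : ∀ i : Fin 5, Function.Injective (fun j : Fin k => (i, j)) := by
    intro i x y h
    simpa using h
  unfold ccCount
  rw [← Finset.card_image_of_injective _ (hinj i),
    ← Finset.card_image_of_injective _ (hinj (i + 1)), ← Finset.card_union_of_disjoint]
  · by_contra hlt
    rw [not_le, Finset.two_lt_card] at hlt
    obtain ⟨x, hx, y, hy, z, hz, hxy, hxz, hyz⟩ := hlt
    have key : ∀ p ∈ (Finset.image (fun j : Fin k => (i, j))
        (Finset.univ.filter (fun j => c (i, j) = a))) ∪ (Finset.image (fun j : Fin k => (i + 1, j))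
        (Finset.univ.filter (fun j => c (i + 1, j) = a))),
        (p.1 = i ∨ p.1 = i + 1) ∧ c p = a := by
      intro p hp
      simp only [Finset.mem_union, Finset.mem_image, Finset.mem_filter, Finset.mem_univ,
        true_and] at hp
      rcases hp with ⟨j, hj, rfl⟩ | ⟨j, hj, rfl⟩
      · exact ⟨Or.inl rfl, hj⟩
      · exact ⟨Or.inr rfl, hj⟩
    obtain ⟨x1, x2⟩ := key x hx
    obtain ⟨y1, y2⟩ := key y hy
    obtain ⟨z1, z2⟩ := key z hz
    exact hc x y z (cc_adj i x y x1 y1 hxy) (cc_adj i y z y1 z1 hyz) (cc_adj i x z x1 z1 hxz)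
      ⟨x2.trans y2.symm, y2.trans z2.symm⟩
  · rw [Finset.disjoint_left]
    intro p hp hq
    simp only [Finset.mem_image] at hp hq
    obtain ⟨j, -, rfl⟩ := hp
    obtain ⟨j', -, h⟩ := hq
    have h1 : i + 1 = i := congrArg Prod.fst h
    revert h1
    clear * -
    revert i
    decide

theorem ccCount_sum {k : ℕ} (c : Fin 5 × Fin k → Fin k) (i : Fin 5) :
    ∑ a, ccCount c i a = k := by
  have := Finset.card_eq_sum_card_fiberwise (s := (Finset.univ : Finset (Fin k)))
    (t := (Finset.univ : Finset (Fin k))) (f := fun j => c (i, j)) (by intro x _; simp)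
  simpa [ccCount] using this.symm

theorem ccCount_eq {k : ℕ} (c : Fin 5 × Fin k → Fin k)
    (hc : IsTriangleFreeColoring (cycleClique 5 k) c) (i : Fin 5) (a : Fin k) :
    ccCount c i a + ccCount c (i + 1) a = 2 := by
  have h := (Finset.sum_eq_sum_iff_of_le (s := (Finset.univ : Finset (Fin k)))
    (f := fun a => ccCount c i a + ccCount c (i + 1) a) (g := fun _ => 2)
    (fun a _ => ccCount_le c hc i a)).1 (by
      rw [Finset.sum_add_distrib, ccCount_sum, ccCount_sum]
      simp
      omega)
  exact h a (Finset.mem_univ a)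

/-- In every triangle-free `k`-coloring of the `k`-cycle-clique, the vertices of each
joint `J_i` receive pairwise distinct colors. -/
theorem cycleClique_joint_colors_distinct (k : ℕ) (hk : 1 ≤ k)
    (c : Fin 5 × Fin k → Fin k) (hc : IsTriangleFreeColoring (cycleClique 5 k) c)
    (i : Fin 5) : ∀ j j' : Fin k, c (i, j) = c (i, j') → j = j' := by
  intro j j' hj
  have e0 := ccCount_eq c hc i (c (i, j))
  have e1 := ccCount_eq c hc (i + 1) (c (i, j))
  have e2 := ccCount_eq c hc (i + 1 + 1) (c (i, j))
  have e3 := ccCount_eq c hc (i + 1 + 1 + 1) (c (i, j))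
  have e4 := ccCount_eq c hc (i + 1 + 1 + 1 + 1) (c (i, j))
  have h5 : i + 1 + 1 + 1 + 1 + 1 = i := by
    clear * -
    revert i
    decide
  rw [h5] at e4
  have h1 : ccCount c i (c (i, j)) ≤ 1 := by omega
  exact Finset.card_le_one.1 h1 j (by simp) j' (by simp [hj])
end

section
/- Let k ≥ 1. Every assignment of k pairwise distinct colors from {1,…,k} to the k vertices of the joint J₀ of the k-cycle-clique extends to a triangle-free k-coloring of the entire k-cycle-clique. -/
/-- Every assignment of `k` pairwise distinct colors to the joint `J₀` of the
`k`-cycle-clique extends to a triangle-free `k`-coloring of the whole graph. -/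
theorem cycleClique_extend_coloring (k : ℕ) (hk : 1 ≤ k) (d : Fin k → Fin k)
    (hd : Function.Injective d) :
    ∃ c : Fin 5 × Fin k → Fin k,
      IsTriangleFreeColoring (cycleClique 5 k) c ∧ ∀ j : Fin k, c (0, j) = d j := by
  refine ⟨fun p => d p.2, ?_, fun j => rfl⟩
  rintro ⟨a, i⟩ ⟨b, j⟩ ⟨e, l⟩ h1 h2 h3 ⟨e1, e2⟩
  have hij : i = j := hd e1
  have hjl : j = l := hd e2
  subst hij
  subst hjl
  simp only [cycleClique, SimpleGraph.fromRel_adj, ne_eq, Prod.mk.injEq, and_true] at h1 h2 h3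
  clear e1 e2
  revert a b e
  decide
end

section
/- For every integer k ≥ 2, there exists a finite simple graph G with ω(G) = 2k and χ₃(G) = ⌈ω(G)/2⌉ + 1 = k + 1. -/
/-- The clique number: the largest `n` such that `G` contains `K_n` as a subgraph. -/
noncomputable def cliqueNum' {V : Type*} (G : SimpleGraph V) : ℕ :=
  sSup {n : ℕ | ∃ s : Finset V, G.IsNClique n s}

/-- Adjacency in the complement of the 7-cycle. -/
def coCycleAdj (x y : Fin 7) : Prop := x ≠ y ∧ x + 1 ≠ y ∧ y + 1 ≠ x

instance : DecidableRel coCycleAdj := fun x y => by unfold coCycleAdj; infer_instance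

/-- The join of the complement of the 7-cycle with a complete graph. -/
def joinGraph (t : ℕ) : SimpleGraph (Fin 7 ⊕ Fin t) where
  Adj u v := match u, v with
    | .inl x, .inl y => coCycleAdj x y
    | .inr a, .inr b => a ≠ b
    | _, _ => True
  symm := ⟨by
    rintro (x | x) (y | y) h
    · exact ⟨h.1.symm, h.2.2, h.2.1⟩
    · trivial
    · trivial
    · exact Ne.symm h⟩
  loopless := ⟨by
    rintro (x | x) h
    · exact h.1 rfl
    · exact h rfl⟩

theorem joinGraph_ll {t : ℕ} (x y : Fin 7) :
    (joinGraph t).Adj (.inl x) (.inl y) ↔ coCycleAdj x y := Iff.rfl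
theorem joinGraph_rr {t : ℕ} (x y : Fin t) :
    (joinGraph t).Adj (.inr x) (.inr y) ↔ x ≠ y := Iff.rfl
theorem joinGraph_lr {t : ℕ} (x : Fin 7) (y : Fin t) :
    (joinGraph t).Adj (.inl x) (.inr y) := trivial
theorem joinGraph_rl {t : ℕ} (x : Fin 7) (y : Fin t) :
    (joinGraph t).Adj (.inr y) (.inl x) := trivial

set_option maxRecDepth 100000 in
theorem seven_triangle : ∀ A : Finset (Fin 7), 4 < A.card →
    ∃ x ∈ A, ∃ y ∈ A, ∃ z ∈ A, coCycleAdj x y ∧ coCycleAdj y z ∧ coCycleAdj x z := by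
  decide

set_option maxRecDepth 100000 in
theorem seven_edge : ∀ A : Finset (Fin 7), 2 < A.card →
    ∃ x ∈ A, ∃ y ∈ A, coCycleAdj x y := by
  decide

set_option maxRecDepth 100000 in
theorem seven_clique : ∀ A : Finset (Fin 7),
    (∀ x ∈ A, ∀ y ∈ A, x ≠ y → coCycleAdj x y) → A.card ≤ 3 := by
  decide

theorem class_bound {t : ℕ} (A : Finset (Fin 7)) (B : Finset (Fin t))
    (h : ∀ u ∈ A.disjSum B, ∀ v ∈ A.disjSum B, ∀ w ∈ A.disjSum B,
      (joinGraph t).Adj u v → (joinGraph t).Adj v w → (joinGraph t).Adj u w → False) :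
    A.card + 2 * B.card ≤ 4 := by
  have hB : B.card ≤ 2 := by
    by_contra hc
    obtain ⟨a, b, c, ha, hb, hc, hab, hac, hbc⟩ := Finset.two_lt_card_iff.1 (not_le.1 hc)
    exact h (.inr a) (by simpa) (.inr b) (by simpa) (.inr c) (by simpa) hab hbc hac
  have h0 : A.card ≤ 4 := by
    by_contra hc
    obtain ⟨x, hx, y, hy, z, hz, h1, h2, h3⟩ := seven_triangle A (not_le.1 hc)
    exact h (.inl x) (by simpa) (.inl y) (by simpa) (.inl z) (by simpa) h1 h2 h3
  have h1 : 0 < B.card → A.card ≤ 2 := by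
    intro hb
    obtain ⟨b, hb⟩ := Finset.card_pos.1 hb
    by_contra hc
    obtain ⟨x, hx, y, hy, h1⟩ := seven_edge A (not_le.1 hc)
    exact h (.inl x) (by simpa) (.inl y) (by simpa) (.inr b) (by simpa) h1
      (joinGraph_lr _ _) (joinGraph_lr _ _)
  have h2 : 1 < B.card → A.card ≤ 0 := by
    intro hb
    obtain ⟨a, ha, b, hb, hab⟩ := Finset.one_lt_card.1 hb
    by_contra hc
    obtain ⟨x, hx⟩ := Finset.card_pos.1 (not_le.1 hc)
    exact h (.inl x) (by simpa) (.inr a) (by simpa) (.inr b) (by simpa)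
      (joinGraph_lr _ _) hab (joinGraph_lr _ _)
  omega

theorem joinGraph_lower {t k : ℕ} (c : Fin 7 ⊕ Fin t → Fin k)
    (hc : IsTriangleFreeColoring (joinGraph t) c) : 7 + 2 * t ≤ 4 * k := by
  have key : ∀ i : Fin k, (Finset.univ.filter fun x : Fin 7 => c (.inl x) = i).card +
      2 * (Finset.univ.filter fun x : Fin t => c (.inr x) = i).card ≤ 4 := by
    intro i
    apply class_bound
    have hm : ∀ u ∈ (Finset.univ.filter fun x : Fin 7 => c (.inl x) = i).disjSum
        (Finset.univ.filter fun x : Fin t => c (.inr x) = i), c u = i := by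
      rintro (u | u) hu <;> simpa using hu
    intro u hu v hv w hw h1 h2 h3
    exact hc u v w h1 h2 h3 ⟨(hm u hu).trans (hm v hv).symm, (hm v hv).trans (hm w hw).symm⟩
  have hs := Finset.sum_le_sum fun i (_ : i ∈ (Finset.univ : Finset (Fin k))) => key i
  have e1 := Finset.card_eq_sum_card_fiberwise (s := (Finset.univ : Finset (Fin 7)))
    (t := (Finset.univ : Finset (Fin k))) (f := fun x => c (.inl x)) (by simp [Set.MapsTo])
  have e2 := Finset.card_eq_sum_card_fiberwise (s := (Finset.univ : Finset (Fin t)))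
    (t := (Finset.univ : Finset (Fin k))) (f := fun x => c (.inr x)) (by simp [Set.MapsTo])
  rw [Finset.sum_add_distrib, ← Finset.mul_sum, ← e1, ← e2] at hs
  simp at hs
  omega

/-- The colouring of the 7-cycle part. -/
def sevenColor (m : ℕ) (x : Fin 7) : Fin (m + 3) :=
  if x.val ≤ 3 then ⟨m + 1, by omega⟩ else if x.val ≤ 5 then ⟨m, by omega⟩ else ⟨m + 2, by omega⟩

theorem joinGraph_upper (m : ℕ) : ∃ c : Fin 7 ⊕ Fin (2 * m + 1) → Fin (m + 3),
    IsTriangleFreeColoring (joinGraph (2 * m + 1)) c := by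
  refine ⟨Sum.elim (sevenColor m) fun x => ⟨x.val / 2, by omega⟩, ?_⟩
  have q : ∀ (x : Fin 7) (a : Fin (2 * m + 1)),
      (sevenColor m x).val = a.val / 2 → a.val = 2 * m ∧ (x = 4 ∨ x = 5) := by
    intro x a h
    have := a.2
    unfold sevenColor at h
    split_ifs at h <;> simp at h <;> omega
  have adj45 : ∀ x y : Fin 7, (x = 4 ∨ x = 5) → (y = 4 ∨ y = 5) → ¬ coCycleAdj x y := by decide
  have tri : ∀ x y z : Fin 7, coCycleAdj x y → coCycleAdj y z → coCycleAdj x z →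
      ¬ ((if x.val ≤ 3 then 1 else if x.val ≤ 5 then 0 else 2) =
          (if y.val ≤ 3 then 1 else if y.val ≤ 5 then 0 else 2) ∧
        (if y.val ≤ 3 then 1 else if y.val ≤ 5 then 0 else 2) =
          (if z.val ≤ 3 then 1 else if z.val ≤ 5 then 0 else 2)) := by decide
  have sv : ∀ x : Fin 7, (sevenColor m x).val =
      m + (if x.val ≤ 3 then 1 else if x.val ≤ 5 then 0 else 2) := by
    intro x; unfold sevenColor; split_ifs <;> rfl
  rintro (x | x) (y | y) (z | z) h1 h2 h3 ⟨h4, h5⟩ <;>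
    simp only [Sum.elim_inl, Sum.elim_inr, Fin.ext_iff] at h4 h5 <;>
    simp only [joinGraph_ll, joinGraph_rr, ne_eq, Fin.ext_iff] at h1 h2 h3
  · rw [sv, sv] at h4 h5
    exact tri x y z h1 h2 h3 ⟨by omega, by omega⟩
  · exact adj45 x y (q x z (h4.trans h5)).2 (q y z h5).2 h1
  · exact adj45 x z (q x y h4).2 (q z y h5.symm).2 h3
  · have := q x y h4
    have := q x z (h4.trans h5)
    omega
  · exact adj45 y z (q y x h4.symm).2 (q z x (h4.trans h5).symm).2 h2
  · have := q y x h4.symm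
    have := q y z h5
    omega
  · have := q z x (h4.trans h5).symm
    have := q z y h5.symm
    omega
  · omega

theorem joinGraph_clique_le {t n : ℕ} (s : Finset (Fin 7 ⊕ Fin t))
    (hs : (joinGraph t).IsNClique n s) : n ≤ t + 3 := by
  have h1 : s.toLeft.card ≤ 3 := by
    apply seven_clique
    intro x hx y hy hxy
    exact hs.1 (Finset.mem_coe.2 (Finset.mem_toLeft.1 hx))
      (Finset.mem_coe.2 (Finset.mem_toLeft.1 hy)) (by simpa using hxy)
  have h2 : s.toRight.card ≤ t := by simpa using Finset.card_le_univ s.toRight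
  have h3 := Finset.card_toLeft_add_card_toRight (u := s)
  have := hs.2
  omega

theorem joinGraph_clique (t : ℕ) : ∃ s, (joinGraph t).IsNClique (t + 3) s := by
  refine ⟨({0, 2, 4} : Finset (Fin 7)).disjSum Finset.univ, ?_, ?_⟩
  · have : ∀ x ∈ ({0, 2, 4} : Finset (Fin 7)), ∀ y ∈ ({0, 2, 4} : Finset (Fin 7)),
        x ≠ y → coCycleAdj x y := by decide
    rintro (x | x) hx (y | y) hy hxy
    · exact this x (by simpa using hx) y (by simpa using hy) (by simpa using hxy)
    · trivial
    · trivial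
    · exact fun h => hxy (by rw [h])
  · rw [Finset.card_disjSum]
    simp
    rw [add_comm]

theorem exists_graph_meeting_bound (k : ℕ) (hk : 2 ≤ k) :
    ∃ (n : ℕ) (G : SimpleGraph (Fin n)),
      cliqueNum' G = 2 * k ∧ triChromNum G = k + 1 ∧
        triChromNum G = (cliqueNum' G + 1) / 2 + 1 := by
  obtain ⟨m, rfl⟩ := Nat.exists_eq_add_of_le' hk
  let H := joinGraph (2 * m + 1)
  let e : Fin (7 + (2 * m + 1)) ≃ Fin 7 ⊕ Fin (2 * m + 1) := finSumFinEquiv.symm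
  have hcl : cliqueNum' (H.comap e) = 2 * (m + 2) := by
    apply IsGreatest.csSup_eq
    constructor
    · obtain ⟨s, hs⟩ := joinGraph_clique (2 * m + 1)
      refine ⟨s.map e.symm.toEmbedding, ?_, ?_⟩
      · intro x hx y hy hxy
        simp only [Finset.coe_map, Equiv.coe_toEmbedding, Set.mem_image, Finset.mem_coe] at hx hy
        obtain ⟨x, hx, rfl⟩ := hx
        obtain ⟨y, hy, rfl⟩ := hy
        simp only [SimpleGraph.comap_adj, Equiv.apply_symm_apply]
        exact hs.1 hx hy (fun h => hxy (by rw [h]))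
      · rw [Finset.card_map, hs.2]; ring
    · rintro n ⟨s, hs⟩
      have : H.IsNClique n (s.map e.toEmbedding) := by
        refine ⟨?_, by rw [Finset.card_map, hs.2]⟩
        intro x hx y hy hxy
        simp only [Finset.coe_map, Equiv.coe_toEmbedding, Set.mem_image, Finset.mem_coe] at hx hy
        obtain ⟨x, hx, rfl⟩ := hx
        obtain ⟨y, hy, rfl⟩ := hy
        exact hs.1 hx hy (fun h => hxy (by rw [h]))
      have := joinGraph_clique_le _ this
      omega
  have htri : triChromNum (H.comap e) = m + 2 + 1 := by
    apply IsLeast.csInf_eq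
    constructor
    · obtain ⟨c, hc⟩ := joinGraph_upper m
      exact ⟨c ∘ e, fun u v w h1 h2 h3 => hc _ _ _ h1 h2 h3⟩
    · rintro j ⟨c, hc⟩
      have : IsTriangleFreeColoring H (c ∘ e.symm) := by
        intro u v w h1 h2 h3
        exact hc _ _ _ (by simpa using h1) (by simpa using h2) (by simpa using h3)
      have := joinGraph_lower _ this
      omega
  refine ⟨_, H.comap e, hcl, htri, ?_⟩
  rw [hcl, htri]
  omega
end

section
/- There exists a finite simple graph G with ω(G) = 3 (i.e., G contains a triangle but contains no K₄ as a subgraph) and χ₃(G) = 3 = ⌈ω(G)/2⌉ + 1. -/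
/-- Adjacency in the Paley graph on 17 vertices. -/
def padj (a b : Fin 17) : Bool := Nat.testBit 107286 ((a.val + 17 - b.val) % 17)

/-- The Paley graph on 17 vertices. -/
def paley : SimpleGraph (Fin 17) where
  Adj a b := padj a b = true
  symm := ⟨by decide +kernel⟩
  loopless := ⟨by decide +kernel⟩

/-- `v` forms a triangle with two vertices of `A`. -/
def hasTri (v : Fin 17) (A : List (Fin 17)) : Bool :=
  A.any fun x => padj v x && A.any fun y => padj x y && padj v y

/-- Backtracking search: no way to extend the two colour classes `A`, `B`. -/
def refute : List (Fin 17) → List (Fin 17) → List (Fin 17) → Bool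
  | [], _, _ => false
  | v :: vs, A, B =>
    (hasTri v A || refute vs (v :: A) B) && (hasTri v B || refute vs A (v :: B))

lemma hasTri_sound {c : Fin 17 → Fin 2} (hc : IsTriangleFreeColoring paley c)
    {v : Fin 17} {A : List (Fin 17)} {i : Fin 2} (hA : ∀ x ∈ A, c x = i) (hv : c v = i) :
    hasTri v A = false := by
  by_contra h
  simp only [hasTri, Bool.not_eq_false, List.any_eq_true, Bool.and_eq_true] at h
  obtain ⟨x, hx, hvx, y, hy, hxy, hvy⟩ := h
  exact hc v x y hvx hxy hvy ⟨by rw [hv, hA x hx], by rw [hA x hx, hA y hy]⟩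

lemma refute_sound {c : Fin 17 → Fin 2} (hc : IsTriangleFreeColoring paley c) :
    ∀ (vs A B : List (Fin 17)), (∀ x ∈ A, c x = 0) → (∀ x ∈ B, c x = 1) →
      refute vs A B = false := by
  intro vs
  induction vs with
  | nil => intros; rfl
  | cons v vs ih =>
    intro A B hA hB
    have h01 : c v = 0 ∨ c v = 1 := by
      generalize c v = i
      revert i
      decide
    rcases h01 with h | h
    · have h1 := hasTri_sound hc hA h
      have h2 := ih (v :: A) B (by simpa [h] using hA) hB
      simp [refute, h1, h2]
    · have h1 := hasTri_sound hc hB h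
      have h2 := ih A (v :: B) hA (by simpa [h] using hB)
      simp [refute, h1, h2]

lemma paley_not_two (c : Fin 17 → Fin 2) : ¬ IsTriangleFreeColoring paley c := by
  intro hc
  have h := refute_sound hc (List.finRange 17) [] [] (by simp) (by simp)
  have hr : refute (List.finRange 17) [] [] = true := by decide +kernel
  simp [hr] at h

lemma paley_tri : triChromNum paley = 3 := by
  have hmem : (3 : ℕ) ∈ {k : ℕ | ∃ c : Fin 17 → Fin k, IsTriangleFreeColoring paley c} := by
    refine ⟨![1, 0, 2, 0, 1, 1, 2, 1, 0, 0, 1, 2, 0, 2, 1, 1, 2], ?_⟩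
    change ∀ u v w : Fin 17, padj u v = true → padj v w = true → padj u w = true → _
    decide +kernel
  apply le_antisymm (Nat.sInf_le hmem)
  apply le_csInf ⟨3, hmem⟩
  rintro k ⟨c, hc⟩
  by_contra hk
  have hk2 : k ≤ 2 := by omega
  apply paley_not_two (fun v => Fin.castLE hk2 (c v))
  intro u v w h1 h2 h3 h
  apply hc u v w h1 h2 h3
  simpa using h

lemma paley_k4 : ∀ a b : Fin 17, padj a b = true → ∀ c : Fin 17, padj a c = true →
    padj b c = true → ∀ d : Fin 17, padj a d = true → padj b d = true →
    padj c d = true → False := by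
  decide +kernel

lemma paley_clique : cliqueNum' paley = 3 := by
  have hmem : (3 : ℕ) ∈ {n : ℕ | ∃ s : Finset (Fin 17), paley.IsNClique n s} := by
    refine ⟨{0, 1, 2}, ?_⟩
    rw [SimpleGraph.is3Clique_triple_iff]
    change padj 0 1 = true ∧ padj 0 2 = true ∧ padj 1 2 = true
    decide +kernel
  have hub : ∀ n ∈ {n : ℕ | ∃ s : Finset (Fin 17), paley.IsNClique n s}, n ≤ 3 := by
    rintro n ⟨s, hs⟩
    by_contra hn
    have hfree : paley.CliqueFree 4 := by
      by_contra hcon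
      have f := SimpleGraph.topEmbeddingOfNotCliqueFree hcon
      have key : ∀ i j : Fin 4, i ≠ j → padj (f i) (f j) = true := by
        intro i j hij
        have h : paley.Adj (f i) (f j) := f.map_rel_iff.2 (by simpa using hij)
        exact h
      exact paley_k4 _ _ (key 0 1 (by decide)) _ (key 0 2 (by decide)) (key 1 2 (by decide))
        _ (key 0 3 (by decide)) (key 1 3 (by decide)) (key 2 3 (by decide))
    exact hfree.mono (by omega) s hs
  exact le_antisymm (csSup_le ⟨3, hmem⟩ hub) (le_csSup ⟨3, hub⟩ hmem)

/-- There is a finite simple graph with `ω(G) = 3` and `χ₃(G) = 3 = ⌈ω(G)/2⌉ + 1`. -/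
theorem exists_K4free_graph_meeting_bound :
    ∃ (n : ℕ) (G : SimpleGraph (Fin n)),
      cliqueNum' G = 3 ∧ triChromNum G = 3 ∧
        triChromNum G = (cliqueNum' G + 1) / 2 + 1 := by
  refine ⟨17, paley, paley_clique, paley_tri, ?_⟩
  rw [paley_clique, paley_tri]
end

section
/- Let G be a finite connected simple graph with more than 3 vertices that is not a complete graph on an odd number of vertices. Then χ₃(G) ≤ ⌈Δ(G)/2⌉. -/
open Classical in
/-- Ordered monochromatic adjacent pairs avoiding `u`. -/
noncomputable def monoPairs {V : Type*} [Fintype V] (G : SimpleGraph V) {k : ℕ}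
    (c : V → Fin k) (u : V) : Finset (V × V) :=
  Finset.univ.filter fun p => G.Adj p.1 p.2 ∧ p.1 ≠ u ∧ p.2 ≠ u ∧ c p.1 = c p.2

/-- `c` is triangle-free away from `u`. -/
def TFOff {V : Type*} (G : SimpleGraph V) {k : ℕ} (c : V → Fin k) (u : V) : Prop :=
  ∀ p q r : V, p ≠ u → q ≠ u → r ≠ u → G.Adj p q → G.Adj q r → G.Adj p r →
    ¬ (c p = c q ∧ c q = c r)

/-- A minimal state: triangle-free coloring off `u` with fewest monochromatic pairs. -/
def MinState {V : Type*} [Fintype V] (G : SimpleGraph V) {k : ℕ}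
    (c : V → Fin k) (u : V) : Prop :=
  TFOff G c u ∧ ∀ (d : V → Fin k) (w : V), TFOff G d w →
    (monoPairs G c u).card ≤ (monoPairs G d w).card

section
variable {V : Type*} [Fintype V] {G : SimpleGraph V} {k : ℕ}

open Classical in
theorem tfoff_pair (hno : ¬ ∃ c : V → Fin k, IsTriangleFreeColoring G c)
    {c : V → Fin k} {u : V} (h : TFOff G c u) (m : Fin k) :
    ∃ z w, G.Adj u z ∧ G.Adj u w ∧ G.Adj z w ∧ c z = m ∧ c w = m := by
  by_contra hcon
  push Not at hcon
  apply hno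
  refine ⟨Function.update c u m, ?_⟩
  rintro p q r hpq hqr hpr ⟨h1, h2⟩
  by_cases hp : p = u
  · subst hp
    have hq := hpq.ne'
    have hr := hpr.ne'
    simp only [Function.update_self, Function.update_of_ne hq, Function.update_of_ne hr] at h1 h2
    exact hcon q r hpq hpr hqr h1.symm (h2 ▸ h1.symm)
  by_cases hq : q = u
  · subst hq
    have hr := hqr.ne'
    simp only [Function.update_self, Function.update_of_ne hp, Function.update_of_ne hr] at h1 h2
    exact hcon p r hpq.symm hqr hpr h1 h2.symm
  by_cases hr : r = u
  · subst hr
    simp only [Function.update_self, Function.update_of_ne hp, Function.update_of_ne hq] at h1 h2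
    exact hcon p q hpr.symm hqr.symm hpq (h1.trans h2) h2
  simp only [Function.update_of_ne hp, Function.update_of_ne hq, Function.update_of_ne hr] at h1 h2
  exact h p q r hp hq hr hpq hqr hpr ⟨h1, h2⟩

open Classical in
theorem tfoff_two_le (hno : ¬ ∃ c : V → Fin k, IsTriangleFreeColoring G c)
    {c : V → Fin k} {u : V} (h : TFOff G c u) (m : Fin k) :
    2 ≤ (((Finset.univ.filter fun z => G.Adj u z)).filter fun z => c z = m).card := by
  obtain ⟨z, w, h1, h2, h3, h4, h5⟩ := tfoff_pair hno h m
  rw [← Finset.card_pair h3.ne]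
  apply Finset.card_le_card
  intro t ht
  simp only [Finset.mem_insert, Finset.mem_singleton] at ht
  rcases ht with rfl | rfl <;> simp [*]

open Classical in
theorem tfoff_deg (hno : ¬ ∃ c : V → Fin k, IsTriangleFreeColoring G c)
    {c : V → Fin k} {u : V} (h : TFOff G c u) :
    2 * k ≤ (Finset.univ.filter fun z => G.Adj u z).card := by
  rw [Finset.card_eq_sum_card_fiberwise (f := c) (t := Finset.univ) (by simp)]
  calc 2 * k = ∑ m : Fin k, 2 := by simp [mul_comm]
    _ ≤ _ := Finset.sum_le_sum fun m _ => tfoff_two_le hno h m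

open Classical in
theorem tfoff_uniq (hno : ¬ ∃ c : V → Fin k, IsTriangleFreeColoring G c)
    (hdeg : ∀ v, (Finset.univ.filter fun z => G.Adj v z).card ≤ 2 * k)
    {c : V → Fin k} {u : V} (h : TFOff G c u) {p q r : V}
    (hp : G.Adj u p) (hq : G.Adj u q) (hr : G.Adj u r) (hpq : c p = c q) (hqr : c q = c r) :
    p = q ∨ q = r ∨ p = r := by
  by_contra hcon
  push Not at hcon
  obtain ⟨n1, n2, n3⟩ := hcon
  have h3 : 2 < (((Finset.univ.filter fun z => G.Adj u z)).filter fun z => c z = c p).card := by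
    have : ({p, q, r} : Finset V).card = 3 := by
      rw [Finset.card_eq_three]; exact ⟨p, q, r, n1, n3, n2, rfl⟩
    have h' : ({p, q, r} : Finset V) ⊆
        ((Finset.univ.filter fun z => G.Adj u z)).filter fun z => c z = c p := by
      intro t ht
      simp only [Finset.mem_insert, Finset.mem_singleton] at ht
      rcases ht with rfl | rfl | rfl <;> simp [*]
    have := Finset.card_le_card h'
    omega
  have hd := hdeg u
  rw [Finset.card_eq_sum_card_fiberwise (f := c) (t := Finset.univ) (by simp)] at hd
  have : ∑ m : Fin k, 2 < ∑ m : Fin k,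
      (((Finset.univ.filter fun z => G.Adj u z)).filter fun z => c z = m).card :=
    Finset.sum_lt_sum (fun m _ => tfoff_two_le hno h m) ⟨c p, Finset.mem_univ _, h3⟩
  simp at this
  omega

open Classical in
theorem tfoff_swap (hno : ¬ ∃ c : V → Fin k, IsTriangleFreeColoring G c)
    (hdeg : ∀ v, (Finset.univ.filter fun z => G.Adj v z).card ≤ 2 * k)
    {c : V → Fin k} {u z : V} (h : TFOff G c u) (hz : G.Adj u z) :
    TFOff G (Function.update c u (c z)) z := by
  have key : ∀ a b, a ≠ z → b ≠ z → G.Adj u a → G.Adj u b → G.Adj a b → c a = c z →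
      c b = c z → False := by
    intro a b ha hb h1 h2 h3 h4 h5
    rcases tfoff_uniq hno hdeg h h1 h2 hz (h4.trans h5.symm) h5 with e | e | e
    · exact h3.ne e
    · exact hb e
    · exact ha e
  rintro p q r zp zq zr hpq hqr hpr ⟨h1, h2⟩
  by_cases hp : p = u
  · subst hp
    have hq := hpq.ne'
    have hr := hpr.ne'
    simp only [Function.update_self, Function.update_of_ne hq, Function.update_of_ne hr] at h1 h2
    exact key q r zq zr hpq hpr hqr h1.symm (h2 ▸ h1.symm)
  by_cases hq : q = u
  · subst hq
    have hr := hqr.ne'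
    simp only [Function.update_self, Function.update_of_ne hp, Function.update_of_ne hr] at h1 h2
    exact key p r zp zr hpq.symm hqr hpr h1 h2.symm
  by_cases hr : r = u
  · subst hr
    simp only [Function.update_self, Function.update_of_ne hp, Function.update_of_ne hq] at h1 h2
    exact key p q zp zq hpr.symm hqr.symm hpq (h1.trans h2) h2
  simp only [Function.update_of_ne hp, Function.update_of_ne hq, Function.update_of_ne hr] at h1 h2
  exact h p q r hp hq hr hpq hqr hpr ⟨h1, h2⟩

open Classical in
theorem tfoff_partner (hno : ¬ ∃ c : V → Fin k, IsTriangleFreeColoring G c)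
    (hdeg : ∀ v, (Finset.univ.filter fun z => G.Adj v z).card ≤ 2 * k)
    {c : V → Fin k} {u z : V} (h : TFOff G c u) (hz : G.Adj u z) :
    ∃ w, G.Adj u w ∧ G.Adj z w ∧ c w = c z := by
  obtain ⟨a, b, h1, h2, h3, h4, h5⟩ := tfoff_pair hno h (c z)
  rcases tfoff_uniq hno hdeg h h1 h2 hz (h4.trans h5.symm) h5 with e | e | e
  · exact (h3.ne e).elim
  · subst e; exact ⟨a, h1, h3.symm, h4⟩
  · subst e; exact ⟨b, h2, h3, h5⟩

open Classical in
theorem swap_card (hno : ¬ ∃ c : V → Fin k, IsTriangleFreeColoring G c)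
    (hdeg : ∀ v, (Finset.univ.filter fun z => G.Adj v z).card ≤ 2 * k)
    {c : V → Fin k} {u z w : V} (h : TFOff G c u) (hz : G.Adj u z) (hw : G.Adj u w)
    (hzw : G.Adj z w) (hc : c w = c z) :
    ∃ C : Finset (V × V), (∀ p ∈ C, p.1 ≠ z ∧ p.2 ≠ z) ∧ C ⊆ monoPairs G c u ∧
      (monoPairs G (Function.update c u (c z)) z).card ≤ C.card + 2 := by
  refine ⟨(monoPairs G c u).filter fun p => p.1 ≠ z ∧ p.2 ≠ z, by simp,
    Finset.filter_subset _ _, ?_⟩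
  have key : ∀ q, q ≠ z → G.Adj u q → c q = c z → q = w := by
    intro q hq h1 h2
    rcases tfoff_uniq hno hdeg h h1 hw hz (h2.trans hc.symm) hc with e | e | e
    · exact e
    · exact (hzw.ne' e).elim
    · exact (hq e).elim
  have hsub : monoPairs G (Function.update c u (c z)) z ⊆
      ((monoPairs G c u).filter fun p => p.1 ≠ z ∧ p.2 ≠ z) ∪ {(u, w), (w, u)} := by
    rintro ⟨p, q⟩ hpq
    simp only [monoPairs, Finset.mem_filter, Finset.mem_univ, true_and] at hpq
    obtain ⟨h1, h2, h3, h4⟩ := hpq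
    simp only [monoPairs, Finset.mem_union, Finset.mem_filter, Finset.mem_univ, true_and,
      Finset.mem_insert, Finset.mem_singleton, Prod.mk.injEq]
    by_cases hp : p = u
    · subst hp
      have hq := h1.ne'
      simp only [Function.update_self, Function.update_of_ne hq] at h4
      right; left; exact ⟨rfl, key q h3 h1 h4.symm⟩
    by_cases hq : q = u
    · subst hq
      simp only [Function.update_self, Function.update_of_ne hp] at h4
      right; right; exact ⟨key p h2 h1.symm h4, rfl⟩
    simp only [Function.update_of_ne hp, Function.update_of_ne hq] at h4
    left; exact ⟨⟨h1, hp, hq, h4⟩, h2, h3⟩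
  refine (Finset.card_le_card hsub).trans ((Finset.card_union_le _ _).trans ?_)
  have := Finset.card_le_two (a := (u, w)) (b := (w, u))
  omega

open Classical in
theorem MinState.swap (hno : ¬ ∃ c : V → Fin k, IsTriangleFreeColoring G c)
    (hdeg : ∀ v, (Finset.univ.filter fun z => G.Adj v z).card ≤ 2 * k)
    {c : V → Fin k} {u z : V} (h : MinState G c u) (hz : G.Adj u z) :
    MinState G (Function.update c u (c z)) z := by
  refine ⟨tfoff_swap hno hdeg h.1 hz, fun d t hd => le_trans ?_ (h.2 d t hd)⟩
  obtain ⟨w, h1, h2, h3⟩ := tfoff_partner hno hdeg h.1 hz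
  obtain ⟨C, hC1, hC2, hC3⟩ := swap_card hno hdeg h.1 hz h1 h2 h3
  refine hC3.trans ?_
  have hd : Disjoint C {(z, w), (w, z)} := by
    rw [Finset.disjoint_left]
    intro p hp hp'
    simp only [Finset.mem_insert, Finset.mem_singleton] at hp'
    rcases hp' with rfl | rfl
    · exact (hC1 _ hp).1 rfl
    · exact (hC1 _ hp).2 rfl
  have hc2 : ({(z, w), (w, z)} : Finset (V × V)).card = 2 :=
    Finset.card_pair (by simp [h2.ne])
  rw [← hc2, ← Finset.card_union_of_disjoint hd]
  apply Finset.card_le_card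
  apply Finset.union_subset hC2
  intro p hp
  simp only [Finset.mem_insert, Finset.mem_singleton] at hp
  rcases hp with rfl | rfl <;>
    simp [monoPairs, h2, h2.symm, h1.ne', hz.ne', h3]

open Classical in
theorem MinState.pair (hno : ¬ ∃ c : V → Fin k, IsTriangleFreeColoring G c)
    (hdeg : ∀ v, (Finset.univ.filter fun z => G.Adj v z).card ≤ 2 * k)
    {c : V → Fin k} {u z t : V} (h : MinState G c u) (hz : G.Adj u z) (hzt : G.Adj z t)
    (ht : t ≠ u) (hct : c t = c z) : G.Adj u t := by
  obtain ⟨w, h1, h2, h3⟩ := tfoff_partner hno hdeg h.1 hz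
  by_contra hut
  have htw : t ≠ w := by rintro rfl; exact hut h1
  obtain ⟨C, hC1, hC2, hC3⟩ := swap_card hno hdeg h.1 hz h1 h2 h3
  have hmin := h.2 _ _ (tfoff_swap hno hdeg h.1 hz)
  have hd : Disjoint C {(z, w), (w, z), (z, t)} := by
    rw [Finset.disjoint_left]
    intro p hp hp'
    simp only [Finset.mem_insert, Finset.mem_singleton] at hp'
    rcases hp' with rfl | rfl | rfl
    · exact (hC1 _ hp).1 rfl
    · exact (hC1 _ hp).2 rfl
    · exact (hC1 _ hp).1 rfl
  have hc2 : ({(z, w), (w, z), (z, t)} : Finset (V × V)).card = 3 := by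
    rw [Finset.card_eq_three]
    exact ⟨_, _, _, by simp [h2.ne], by simp [htw.symm], by simp [h2.ne'], rfl⟩
  have : C.card + 3 ≤ (monoPairs G c u).card := by
    rw [← hc2, ← Finset.card_union_of_disjoint hd]
    apply Finset.card_le_card
    apply Finset.union_subset hC2
    intro p hp
    simp only [Finset.mem_insert, Finset.mem_singleton] at hp
    rcases hp with rfl | rfl | rfl <;>
      simp [monoPairs, h2, h2.symm, h1.ne', hz.ne', h3, hzt, ht, hct]
  omega

open Classical in
theorem chain_false (hno : ¬ ∃ c : V → Fin k, IsTriangleFreeColoring G c)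
    (hdeg : ∀ v, (Finset.univ.filter fun z => G.Adj v z).card ≤ 2 * k)
    (i j : Fin k) (x v b : V) (hvx : G.Adj v x) (hvb : G.Adj v b)
    (hxb : ¬ G.Adj x b) (n : ℕ) :
    ∀ (U M : Finset V) (c : V → Fin k) (u : V) (m m' : Fin k), Uᶜ.card ≤ n →
      ((m = i ∧ m' = j) ∨ (m = j ∧ m' = i)) → i ≠ j → MinState G c u →
      u ∉ U → x ∈ U → v ∈ U → b ∈ U → c x = i → c v = j → c b = j →
      M ⊆ U →
      (∀ r ∈ M, c r = m → ¬ G.Adj r u) →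
      (∀ r ∈ M, ∀ z, z ∉ U → z ≠ u → (c z = m ∨ c z = m') → ¬ G.Adj r z) →
      (∀ z ∈ U, (c z = m ∨ c z = m') → ∃ r, (r ∈ M ∨ r = x) ∧ c r = c z ∧ (z = r ∨ G.Adj z r)) →
      (∀ q, c q = m' → G.Adj u q → q ∈ U) →
      (m = i → ¬ G.Adj x u) → False := by
  induction n with
  | zero =>
    intro U M c u m m' hn hm hij hS hu
    have : Uᶜ = ∅ := by simpa using hn
    have h2 : u ∈ Uᶜ := by simpa using hu
    simp [this] at h2
  | succ n ih =>
    intro U M c u m m' hn hm hij hS hu hx hv hb cx cv cb hMU hA hB hC hD hxu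
    have hmm : m ≠ m' := by rcases hm with ⟨rfl, rfl⟩ | ⟨rfl, rfl⟩ <;> tauto
    obtain ⟨z, w, h1, h2, h3, h4, h5⟩ := tfoff_pair hno hS.1 m
    have hfresh : ∀ s, G.Adj u s → c s = m → s ∉ U := by
      intro s hs hcs hsU
      obtain ⟨r, hr, hcr, hsr⟩ := hC s hsU (Or.inl hcs)
      have hrU : r ∈ U := by
        rcases hr with hr | rfl
        · exact hMU hr
        · exact hx
      have hur : G.Adj u r := by
        rcases hsr with rfl | hsr
        · exact hs
        · exact hS.pair hno hdeg hs hsr (by rintro rfl; exact hu hrU) hcr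
      rcases hr with hr | rfl
      · exact hA r hr (hcr.trans hcs) hur.symm
      · refine hxu ?_ hur.symm
        rw [← hcs, ← hcr, cx]
    have hzU := hfresh z h1 h4
    have hwU := hfresh w h2 h5
    have hS' := hS.swap hno hdeg h1
    have hne : ∀ s ∈ U, s ≠ u := by rintro s hs rfl; exact hu hs
    have hup : ∀ s, s ≠ u → Function.update c u (c z) s = c s :=
      fun s hs => Function.update_of_ne hs _ _
    have huu : Function.update c u (c z) u = m := by rw [Function.update_self, h4]
    have huniq : ∀ q, G.Adj u q → c q = m → q = z ∨ q = w := by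
      intro q hq hcq
      rcases tfoff_uniq hno hdeg hS.1 hq h1 h2 (hcq.trans h4.symm) (h4.trans h5.symm) with e | e | e
      · exact Or.inl e
      · exact (h3.ne e).elim
      · exact Or.inr e
    refine ih (insert u (insert w U)) (insert u M) _ z m' m ?_ (by tauto) hij hS'
      ?_ ?_ ?_ ?_ ?_ ?_ ?_ ?_ ?_ ?_ ?_ ?_ ?_
    · have : (insert u (insert w U))ᶜ ⊂ Uᶜ := by
        rw [Finset.ssubset_iff_of_subset]
        · exact ⟨u, by simpa using hu, by simp⟩
        · intro s; simp
      have := Finset.card_lt_card this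
      omega
    · simp [hzU, h1.ne', h3.ne]
    · simp [hx]
    · simp [hv]
    · simp [hb]
    · rw [hup _ (hne _ hx), cx]
    · rw [hup _ (hne _ hv), cv]
    · rw [hup _ (hne _ hb), cb]
    · intro s hs
      simp only [Finset.mem_insert] at hs ⊢
      rcases hs with h | h
      · exact Or.inl h
      · exact Or.inr (Or.inr (hMU h))
    · intro r hr hcr
      rcases Finset.mem_insert.1 hr with rfl | hr
      · rw [huu] at hcr; exact (hmm hcr).elim
      · exact hB r hr z hzU h1.ne' (Or.inl h4)
    · intro r hr q hq hqz hcq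
      simp only [Finset.mem_insert, not_or] at hq
      obtain ⟨q1, q2, q3⟩ := hq
      rw [hup q q1] at hcq
      rcases Finset.mem_insert.1 hr with rfl | hr
      · intro hadj
        rcases hcq with hcq | hcq
        · exact q3 (hD q hcq hadj)
        · rcases huniq q hadj hcq with e | e
          · exact hqz e
          · exact q2 e
      · exact hB r hr q q3 q1 hcq.symm
    · intro s hs hcs
      simp only [Finset.mem_insert] at hs
      rcases hs with rfl | rfl | hs
      · exact ⟨s, by simp, rfl, Or.inl rfl⟩
      · exact ⟨u, by simp, by rw [huu, hup _ h2.ne', h5], Or.inr h2.symm⟩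
      · rw [hup s (hne s hs)] at hcs ⊢
        obtain ⟨r, hr, hcr, hsr⟩ := hC s hs hcs.symm
        have hrU : r ∈ U := by
          rcases hr with hr | rfl
          · exact hMU hr
          · exact hx
        refine ⟨r, ?_, ?_, hsr⟩
        · rcases hr with hr | hr
          · exact Or.inl (Finset.mem_insert_of_mem hr)
          · exact Or.inr hr
        · rw [hup r (hne r hrU), hcr]
    · intro q hcq hzq
      by_cases hqu : q = u
      · simp [hqu]
      rw [hup q hqu] at hcq
      have := hS.pair hno hdeg h1 hzq hqu (hcq.trans h4.symm)
      rcases huniq q this hcq with e | e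
      · exact (hzq.ne' e).elim
      · simp [e]
    · intro _ hxz
      have hS2 := hS'.swap hno hdeg hxz.symm
      have hvz : v ≠ z := by rintro rfl; exact hzU hv
      have hbz : b ≠ z := by rintro rfl; exact hzU hb
      refine hxb (hS2.pair hno hdeg hvx.symm hvb ?_ ?_)
      · rintro rfl; exact hij (cx.symm.trans cb)
      · rw [Function.update_of_ne hvz, Function.update_of_ne hbz, hup _ (hne _ hv),
          hup _ (hne _ hb), cb, cv]

open Classical in
theorem nbr_clique (hno : ¬ ∃ c : V → Fin k, IsTriangleFreeColoring G c)
    (hdeg : ∀ v, (Finset.univ.filter fun z => G.Adj v z).card ≤ 2 * k)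
    {c : V → Fin k} {v x a : V} (hS : MinState G c v) (hx : G.Adj v x) (ha : G.Adj v a)
    (hxa : x ≠ a) : G.Adj x a := by
  by_contra hadj
  obtain ⟨y, hy1, hy2, hy3⟩ := tfoff_partner hno hdeg hS.1 hx
  obtain ⟨b, hb1, hb2, hb3⟩ := tfoff_partner hno hdeg hS.1 ha
  have uniqx : ∀ q, G.Adj v q → c q = c x → q = x ∨ q = y := by
    intro q hq hcq
    rcases tfoff_uniq hno hdeg hS.1 hq hx hy1 hcq hy3.symm with e | e | e
    · exact Or.inl e
    · exact (hy2.ne e).elim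
    · exact Or.inr e
  have uniqa : ∀ q, G.Adj v q → c q = c a → q = a ∨ q = b := by
    intro q hq hcq
    rcases tfoff_uniq hno hdeg hS.1 hq ha hb1 hcq hb3.symm with e | e | e
    · exact Or.inl e
    · exact (hb2.ne e).elim
    · exact Or.inr e
  have hij : c x ≠ c a := by
    intro h
    rcases uniqx a ha h.symm with e | e
    · exact hxa e.symm
    · subst e; exact hadj hy2
  have hxb : ¬ G.Adj x b := by
    intro h
    refine hadj ((hS.swap hno hdeg hx).pair hno hdeg h hb2.symm hxa.symm ?_)
    rw [Function.update_of_ne ha.ne', Function.update_of_ne hb1.ne', hb3]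
  have hS' := hS.swap hno hdeg ha
  have hup : ∀ s, s ≠ v → Function.update c v (c a) s = c s :=
      fun s hs => Function.update_of_ne hs _ _
  have hvv : Function.update c v (c a) v = c a := Function.update_self ..
  have hya : a ≠ y := by rintro rfl; exact hij hy3.symm
  refine chain_false hno hdeg (c x) (c a) x v b hx hb1 hxb _ {v, b, x, y} {v} _ a (c x) (c a)
    le_rfl (Or.inl ⟨rfl, rfl⟩) hij hS' ?_ ?_ ?_ ?_ ?_ ?_ ?_ ?_ ?_ ?_ ?_ ?_ ?_
  · simp [ha.ne', hb2.ne, hxa.symm, hya]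
  · simp
  · simp
  · simp
  · exact hup _ hx.ne'
  · exact hvv
  · rw [hup _ hb1.ne', hb3]
  · simp
  · intro r hr hcr
    rw [Finset.mem_singleton] at hr
    subst hr
    rw [hvv] at hcr
    exact (hij hcr.symm).elim
  · intro r hr z hz hza hcz hvz
    rw [Finset.mem_singleton] at hr
    subst hr
    simp only [Finset.mem_insert, Finset.mem_singleton, not_or] at hz
    rw [hup _ hz.1] at hcz
    rcases hcz with h | h
    · have := uniqx z hvz h; tauto
    · have := uniqa z hvz h; tauto
  · intro z hz _
    simp only [Finset.mem_insert, Finset.mem_singleton] at hz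
    rcases hz with rfl | rfl | rfl | rfl
    · exact ⟨z, by simp, rfl, Or.inl rfl⟩
    · exact ⟨v, by simp, by rw [hvv, hup _ hb1.ne', hb3], Or.inr hb1.symm⟩
    · exact ⟨z, by simp, rfl, Or.inl rfl⟩
    · exact ⟨x, by simp, by rw [hup _ hx.ne', hup _ hy1.ne', hy3], Or.inr hy2.symm⟩
  · intro q hcq haq
    by_cases hqv : q = v
    · simp [hqv]
    rw [hup _ hqv] at hcq
    rcases uniqa q (hS.pair hno hdeg ha haq hqv hcq) hcq with e | e
    · exact (haq.ne' e).elim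
    · simp [e]
  · intro _; exact hadj

open Classical in
theorem exists_clique (hno : ¬ ∃ c : V → Fin k, IsTriangleFreeColoring G c)
    (hdeg : ∀ v, (Finset.univ.filter fun z => G.Adj v z).card ≤ 2 * k)
    {c : V → Fin k} {v : V} (h : TFOff G c v) :
    ∃ v, 2 * k ≤ (Finset.univ.filter fun z => G.Adj v z).card ∧
      ∀ x a, G.Adj v x → G.Adj v a → x ≠ a → G.Adj x a := by
  obtain ⟨⟨d, w⟩, hd, hmin⟩ := Set.exists_min_image
    {s : (V → Fin k) × V | TFOff G s.1 s.2} (fun s => (monoPairs G s.1 s.2).card)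
    (Set.toFinite _) ⟨(c, v), h⟩
  have hS : MinState G d w := ⟨hd, fun d2 w2 hh => hmin (d2, w2) hh⟩
  exact ⟨w, tfoff_deg hno hd, fun x a hx ha hxa => nbr_clique hno hdeg hS hx ha hxa⟩

/-- `G` with only the edges inside `X`. -/
def restr (G : SimpleGraph V) (X : Finset V) : SimpleGraph V where
  Adj a b := G.Adj a b ∧ a ∈ X ∧ b ∈ X
  symm := ⟨fun _ _ h => ⟨h.1.symm, h.2.2, h.2.1⟩⟩
  loopless := ⟨fun _ h => G.loopless.irrefl _ h.1⟩

open Classical in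
theorem colorable_or_clique (hk : 0 < k)
    (hdeg : ∀ v, (Finset.univ.filter fun z => G.Adj v z).card ≤ 2 * k)
    (hcl : ∀ v (s : Finset V), 2 * k ≤ s.card → (∀ x ∈ s, G.Adj v x) →
      ¬ ∀ x ∈ s, ∀ a ∈ s, x ≠ a → G.Adj x a) (X : Finset V) :
    ∃ c : V → Fin k, IsTriangleFreeColoring (restr G X) c := by
  induction X using Finset.induction_on with
  | empty =>
    refine ⟨fun _ => ⟨0, hk⟩, ?_⟩
    intro u v w h
    simp [restr] at h
  | insert v X hv ih =>
    obtain ⟨c, hc⟩ := ih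
    by_contra hno
    have hd : ∀ w, (Finset.univ.filter fun z => (restr G (insert v X)).Adj w z).card ≤ 2 * k := by
      intro w
      refine le_trans (Finset.card_le_card ?_) (hdeg w)
      intro z hz
      simp only [Finset.mem_filter, Finset.mem_univ, true_and] at hz ⊢
      exact hz.1
    have htf : TFOff (restr G (insert v X)) c v := by
      intro p q r hp hq hr h1 h2 h3
      have m : ∀ {t}, t ≠ v → t ∈ insert v X → t ∈ X := by
        intro t ht h
        exact (Finset.mem_insert.1 h).resolve_left ht
      exact hc p q r ⟨h1.1, m hp h1.2.1, m hq h1.2.2⟩ ⟨h2.1, m hq h2.2.1, m hr h2.2.2⟩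
        ⟨h3.1, m hp h3.2.1, m hr h3.2.2⟩
    obtain ⟨w, hw1, hw2⟩ := exists_clique hno hd htf
    refine hcl w _ hw1 ?_ ?_
    · intro x hx
      simp only [Finset.mem_filter, Finset.mem_univ, true_and] at hx
      exact hx.1
    · intro x hx a ha hxa
      simp only [Finset.mem_filter, Finset.mem_univ, true_and] at hx ha
      exact (hw2 x a hx ha hxa).1

end

/-- For a finite connected simple graph `G` with more than 3 vertices that is not a
complete graph on an odd number of vertices, `χ₃(G) ≤ ⌈Δ(G)/2⌉`. -/
theorem triChromNum_le_maxDegree_half {V : Type*} [Fintype V] (G : SimpleGraph V)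
    [DecidableRel G.Adj] (hconn : G.Connected) (hcard : 3 < Fintype.card V)
    (hnc : ¬ (G = ⊤ ∧ Odd (Fintype.card V))) :
    triChromNum G ≤ (G.maxDegree + 1) / 2 := by
  classical
  have hdegeq : ∀ v, (Finset.univ.filter fun z => G.Adj v z).card = G.degree v := by
    intro v
    rw [← SimpleGraph.card_neighborFinset_eq_degree]
    congr 1
    ext z; simp
  have hpos : 0 < G.maxDegree := by
    have : Nontrivial V := Fintype.one_lt_card_iff_nontrivial.1 (by omega)
    obtain ⟨v⟩ := hconn.nonempty
    exact lt_of_lt_of_le (hconn.preconnected.degree_pos_of_nontrivial v) (G.degree_le_maxDegree v)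
  have hdeg : ∀ v, (Finset.univ.filter fun z => G.Adj v z).card ≤
      2 * ((G.maxDegree + 1) / 2) := by
    intro v
    rw [hdegeq]
    have := G.degree_le_maxDegree v
    omega
  obtain ⟨c, hc⟩ := colorable_or_clique (G := G) (k := (G.maxDegree + 1) / 2) (by omega)
    (fun v => by convert hdeg v) (by
    intro v s hs hvs hss
    apply hnc
    have hvn : v ∉ s := fun h => G.loopless.irrefl _ (hvs v h)
    have hcl : ∀ x ∈ insert v s, ∀ a ∈ insert v s, x ≠ a → G.Adj x a := by
      intro x hx a ha hxa
      rcases Finset.mem_insert.1 hx with e | hx <;> rcases Finset.mem_insert.1 ha with e' | ha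
      · exact (hxa (e.trans e'.symm)).elim
      · rw [e]; exact hvs a ha
      · rw [e']; exact (hvs x hx).symm
      · exact hss x hx a ha hxa
    have hsub : ∀ x ∈ insert v s, (insert v s).erase x ⊆ Finset.univ.filter fun z => G.Adj x z := by
      intro x hx z hz
      rw [Finset.mem_erase] at hz
      simpa using hcl x hx z hz.2 hz.1.symm
    have hcardx : ∀ x ∈ insert v s, ((insert v s).erase x).card = s.card := by
      intro x hx
      rw [Finset.card_erase_of_mem hx, Finset.card_insert_of_notMem hvn]; rfl
    have heq : ∀ x ∈ insert v s, (insert v s).erase x = Finset.univ.filter fun z => G.Adj x z := by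
      intro x hx
      apply Finset.eq_of_subset_of_card_le (hsub x hx)
      rw [hcardx x hx]
      exact (hdeg x).trans hs
    have hclosed : ∀ x y, G.Adj x y → x ∈ insert v s → y ∈ insert v s := by
      intro x y hxy hx
      have : y ∈ Finset.univ.filter fun z => G.Adj x z := by simpa using hxy
      rw [← heq x hx] at this
      exact Finset.mem_of_mem_erase this
    have hall : ∀ x, x ∈ insert v s := by
      intro x
      obtain ⟨p⟩ := hconn.preconnected v x
      have : ∀ {a b : V} (p : G.Walk a b), a ∈ insert v s → b ∈ insert v s := by
        intro a b p
        induction p with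
        | nil => exact id
        | cons h _ ih => exact fun ha => ih (hclosed _ _ h ha)
      exact this p (Finset.mem_insert_self _ _)
    refine ⟨?_, ?_⟩
    · ext a b
      rw [SimpleGraph.top_adj]
      exact ⟨fun h => h.ne, fun h => hcl a (hall a) b (hall b) h⟩
    · have h1 : insert v s = Finset.univ := Finset.eq_univ_iff_forall.2 hall
      rw [← Finset.card_univ, ← h1, Finset.card_insert_of_notMem hvn]
      have h2 := hdeg v
      have h3 := heq v (Finset.mem_insert_self _ _)
      rw [← h3, hcardx v (Finset.mem_insert_self _ _)] at h2
      exact ⟨(G.maxDegree + 1) / 2, by omega⟩) Finset.univ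
  refine Nat.sInf_le ⟨c, ?_⟩
  intro u v w h1 h2 h3
  exact hc u v w ⟨h1, by simp, by simp⟩ ⟨h2, by simp, by simp⟩ ⟨h3, by simp, by simp⟩
end

section
/- Let G be a finite simple graph that has a vertex cover W of size k. Then G admits a triangle-free (⌈k/2⌉ + 1)-coloring; in particular χ₃(G) ≤ ⌈k/2⌉ + 1. (Concretely: pair up the vertices of W, give each pair one of ⌈k/2⌉ colors, and give all remaining vertices one additional color.) -/
/-- If `G` has a vertex cover of size `k`, then `G` has a triangle-free
`(⌈k/2⌉ + 1)`-coloring; in particular `χ₃(G) ≤ ⌈k/2⌉ + 1`. -/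
theorem triChromNum_le_of_vertexCover {V : Type*} [Fintype V] (G : SimpleGraph V)
    (W : Finset V) (k : ℕ) (hW : ∀ u v : V, G.Adj u v → u ∈ W ∨ v ∈ W)
    (hcard : W.card = k) :
    (∃ c : V → Fin ((k + 1) / 2 + 1), IsTriangleFreeColoring G c) ∧
      triChromNum G ≤ (k + 1) / 2 + 1 := by
  classical
  have key : ∃ c : V → Fin ((k + 1) / 2 + 1), IsTriangleFreeColoring G c := by
    let e : W ≃ Fin k := W.equivFinOfCardEq hcard
    let f : V → ℕ := fun v => if h : v ∈ W then (e ⟨v, h⟩ : ℕ) / 2 else (k + 1) / 2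
    have hfin : ∀ v (h : v ∈ W), f v = (e ⟨v, h⟩ : ℕ) / 2 := fun v h => dif_pos h
    have hfout : ∀ v, v ∉ W → f v = (k + 1) / 2 := fun v h => dif_neg h
    have hlt : ∀ v, v ∈ W → f v < (k + 1) / 2 := by
      intro v h
      have := (e ⟨v, h⟩).isLt
      rw [hfin v h]
      omega
    have hf : ∀ v, f v < (k + 1) / 2 + 1 := by
      intro v
      by_cases h : v ∈ W
      · have := hlt v h
        omega
      · rw [hfout v h]
        omega
    have hne : ∀ u v (hu : u ∈ W) (hv : v ∈ W), u ≠ v →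
        (e ⟨u, hu⟩ : ℕ) ≠ (e ⟨v, hv⟩ : ℕ) := by
      intro u v hu hv huv h
      have h2 := e.injective (Fin.ext h)
      exact huv (congrArg Subtype.val h2)
    -- adjacent vertices of equal color both lie in the cover
    have hmem : ∀ u v, G.Adj u v → f u = f v → u ∈ W ∧ v ∈ W := by
      intro u v huv h
      by_cases hu : u ∈ W
      · refine ⟨hu, ?_⟩
        by_contra hv
        have h1 := hlt u hu
        have h2 := hfout v hv
        omega
      · have hv : v ∈ W := (hW u v huv).resolve_left hu
        have h1 := hlt v hv
        have h2 := hfout u hu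
        omega
    refine ⟨fun v => ⟨f v, hf v⟩, ?_⟩
    rintro u v w huv hvw huw ⟨h1, h2⟩
    have h1 : f u = f v := congrArg Fin.val h1
    have h2 : f v = f w := congrArg Fin.val h2
    obtain ⟨hu, hv⟩ := hmem u v huv h1
    obtain ⟨-, hw⟩ := hmem v w hvw h2
    have a := hne u v hu hv huv.ne
    have b := hne v w hv hw hvw.ne
    have c := hne u w hu hw huw.ne
    rw [hfin u hu, hfin v hv] at h1
    rw [hfin v hv, hfin w hw] at h2
    omega
  exact ⟨key, Nat.sInf_le key⟩
end

section
/- Let r ≥ 5 be an odd integer and k ≥ 1. In every triangle-free k-coloring of the k-cycle-clique with r joints, for every i ∈ {0,…,r−1} the k vertices of the joint J_i receive pairwise distinct colors. -/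
/-- Number of vertices of joint `i` of color `x`. -/
def jointCount {r k : ℕ} (c : Fin r × Fin k → Fin k) (i : Fin r) (x : Fin k) : ℕ :=
  (Finset.univ.filter (fun j : Fin k => c (i, j) = x)).card

lemma jointCount_add {r k : ℕ} (c : Fin r × Fin k → Fin k)
    (hc : IsTriangleFreeColoring (cycleClique r k) c) (i i' : Fin r) (hne : i ≠ i')
    (h : (i.val + 1) % r = i'.val) (x : Fin k) :
    jointCount c i x + jointCount c i' x = 2 := by
  classical
  have hS : ∀ y, ((({i, i'} : Finset (Fin r)) ×ˢ (Finset.univ : Finset (Fin k))).filter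
      (fun p => c p = y)).card = jointCount c i y + jointCount c i' y := by
    intro y
    rw [Finset.card_filter, Finset.sum_product, Finset.sum_pair hne]
    simp [jointCount]
  have hadj : ∀ p q : Fin r × Fin k, (p.1 = i ∨ p.1 = i') → (q.1 = i ∨ q.1 = i') → p ≠ q →
      (cycleClique r k).Adj p q := by
    intro p q hp hq hpq
    unfold cycleClique
    rw [SimpleGraph.fromRel_adj]
    refine ⟨hpq, ?_⟩
    rcases hp with hp | hp <;> rcases hq with hq | hq <;> simp [hp, hq, h]
  have hle : ∀ y, jointCount c i y + jointCount c i' y ≤ 2 := by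
    intro y
    by_contra hlt
    rw [← hS, not_le, Finset.two_lt_card] at hlt
    obtain ⟨u, hu, v, hv, w, hw, huv, huw, hvw⟩ := hlt
    simp only [Finset.mem_filter, Finset.mem_product, Finset.mem_insert, Finset.mem_singleton,
      Finset.mem_univ, and_true] at hu hv hw
    exact hc u v w (hadj _ _ hu.1 hv.1 huv) (hadj _ _ hv.1 hw.1 hvw) (hadj _ _ hu.1 hw.1 huw)
      ⟨hu.2.trans hv.2.symm, hv.2.trans hw.2.symm⟩
  have hj : ∀ l : Fin r, ∑ y, jointCount c l y = k := by
    intro l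
    have := Finset.card_eq_sum_card_fiberwise (s := (Finset.univ : Finset (Fin k)))
      (t := (Finset.univ : Finset (Fin k))) (f := fun j => c (l, j)) (by simp)
    simpa [jointCount] using this.symm
  have hsum : ∑ y, (jointCount c i y + jointCount c i' y) = ∑ _y : Fin k, 2 := by
    rw [Finset.sum_add_distrib, hj, hj]
    simp; ring
  exact (Finset.sum_eq_sum_iff_of_le (fun y _ => hle y)).1 hsum x (Finset.mem_univ x)

/-- For odd `r ≥ 5`, in every triangle-free `k`-coloring of the `k`-cycle-clique with
`r` joints, the vertices of each joint receive pairwise distinct colors. -/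
theorem cycleClique_odd_joints_colors_distinct (r k : ℕ) (hr : 5 ≤ r) (hodd : Odd r)
    (hk : 1 ≤ k) (c : Fin r × Fin k → Fin k)
    (hc : IsTriangleFreeColoring (cycleClique r k) c) (i : Fin r) :
    ∀ j j' : Fin k, c (i, j) = c (i, j') → j = j' := by
  intro j j' hjj
  have hr0 : 0 < r := by omega
  let a : ℕ → ℕ := fun n => jointCount c ⟨n % r, Nat.mod_lt _ hr0⟩ (c (i, j))
  have hstep : ∀ n, a n + a (n + 1) = 2 := by
    intro n
    apply jointCount_add c hc
    · intro h
      have h1 : n % r = (n + 1) % r := congrArg Fin.val h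
      have h2 : (n + 1) % r = (n % r + 1) % r := by simp
      have h3 := Nat.mod_lt n hr0
      rcases Nat.lt_or_ge (n % r + 1) r with h4 | h4
      · rw [Nat.mod_eq_of_lt h4] at h2; omega
      · have h5 : n % r + 1 = r := by omega
        rw [h5, Nat.mod_self] at h2; omega
    · simp
  have heven : ∀ n m, a (n + 2 * m) = a n := by
    intro n m
    induction m with
    | zero => rfl
    | succ m ih =>
      have h1 := hstep (n + 2 * m)
      have h2 := hstep (n + 2 * m + 1)
      have h3 : n + 2 * (m + 1) = n + 2 * m + 1 + 1 := by ring
      rw [h3]; omega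
  obtain ⟨m, hm⟩ := hodd
  have hper : a (i.val + r) = a i.val := by simp [a]
  have h1 := hstep (i.val + 2 * m)
  rw [heven, show i.val + 2 * m + 1 = i.val + r by omega, hper] at h1
  have h2 : a i.val = jointCount c i (c (i, j)) := by
    simp only [a]; congr 1; exact Fin.ext (Nat.mod_eq_of_lt i.isLt)
  have h3 : jointCount c i (c (i, j)) ≤ 1 := by omega
  exact Finset.card_le_one.1 h3 j (by simp) j' (by simp [hjj])
end
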